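/- Let α be a countable ordinal, δ = ω^(α+1), X = [1, δ] with the order topology, G the group of homeomorphisms of X, A_n = [ω^α·(n−1)+1, ω^α·n] for n ≥ 1, π : G → Sym({1,2,…}) the homomorphism determined by π(g)(m) = n iff g(ω^α·m) = ω^α·n, and K* the kernel of π. Suppose h ∈ K*, i ≥ 1, and B, C are bounded clopen subsets of A_i such that h maps A_i \ B onto A_i \ C. Then (P_i(h), Q_i(h)) ∼ (C, B), where P_i(h) = A_i \ h(A_i) and Q_i(h) = A_i \ h⁻¹(A_i). -/

import Mathlib

open Ordinal Topology

noncomputable section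

/-- The ordinal interval `[1, γ]`, i.e. the set of ordinals `β` with `1 ≤ β ≤ γ`, with the
subspace topology induced from the order topology on `Ordinal` (equivalently, its order
topology, since it is order-connected). -/
abbrev OrdIcc (γ : Ordinal) : Type _ := ↥(Set.Icc (1 : Ordinal) γ)

/-- `X = [1, δ]` where `δ = ω^(α+1)`. -/
abbrev Xsp (α : Ordinal) : Type _ := OrdIcc (omega0 ^ (α + 1))

lemma omega_pow_mul_mem (α : Ordinal) (m : ℕ+) :
    omega0 ^ α * ((m : ℕ) : Ordinal) ∈ Set.Icc (1 : Ordinal) (omega0 ^ (α + 1)) := by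
  constructor
  · have h1 : (1 : Ordinal) ≤ omega0 ^ α := Order.one_le_iff_pos.2 (opow_pos _ omega0_pos)
    have h2 : (1 : Ordinal) ≤ ((m : ℕ) : Ordinal) := by exact_mod_cast m.one_le
    calc (1 : Ordinal) = 1 * 1 := (one_mul 1).symm
      _ ≤ omega0 ^ α * ((m : ℕ) : Ordinal) := mul_le_mul' h1 h2
  · rw [Ordinal.add_one_eq_succ, Ordinal.opow_succ]
    exact mul_le_mul' le_rfl (Ordinal.nat_lt_omega0 m).le

/-- The point `ω^α·m` of `X` (for `m ≥ 1`). -/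
def pt (α : Ordinal) (m : ℕ+) : Xsp α :=
  ⟨omega0 ^ α * ((m : ℕ) : Ordinal), omega_pow_mul_mem α m⟩

/-- `A_n = [ω^α·(n−1)+1, ω^α·n]`, as a subset of `X`. -/
def Ablock (α : Ordinal) (n : ℕ+) : Set (Xsp α) :=
  {x : Xsp α | (x : Ordinal) ∈
    Set.Icc (omega0 ^ α * (((n : ℕ) - 1 : ℕ) : Ordinal) + 1) (omega0 ^ α * ((n : ℕ) : Ordinal))}

/-- The defining property of the homomorphism `π : G → Sym({1,2,…})`:
`π(g)(m) = n` iff `g(ω^α·m) = ω^α·n`. -/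
def IsBlockPerm (α : Ordinal) (π : (Xsp α ≃ₜ Xsp α) → Equiv.Perm ℕ+) : Prop :=
  ∀ (g : Xsp α ≃ₜ Xsp α) (m : ℕ+), g (pt α m) = pt α (π g m)

/-- `P_i(g) = A_{π(g)(i)} \ g(A_i)`. -/
def Pset (α : Ordinal) (π : (Xsp α ≃ₜ Xsp α) → Equiv.Perm ℕ+)
    (g : Xsp α ≃ₜ Xsp α) (i : ℕ+) : Set (Xsp α) :=
  Ablock α (π g i) \ (⇑g '' Ablock α i)

/-- `Q_i(g) = A_i \ g⁻¹(A_{π(g)(i)})`. -/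
def Qset (α : Ordinal) (π : (Xsp α ≃ₜ Xsp α) → Equiv.Perm ℕ+)
    (g : Xsp α ≃ₜ Xsp α) (i : ℕ+) : Set (Xsp α) :=
  Ablock α i \ (⇑g ⁻¹' Ablock α (π g i))

/-- `(P₁, Q₁) ∼ (P₂, Q₂)` iff the topological disjoint union `P₁ ⊔ Q₂` is homeomorphic
to `P₂ ⊔ Q₁`. -/
def PairSim (P₁ Q₁ P₂ Q₂ : Type*) [TopologicalSpace P₁] [TopologicalSpace Q₁]
    [TopologicalSpace P₂] [TopologicalSpace Q₂] : Prop :=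
  Nonempty ((P₁ ⊕ Q₂) ≃ₜ (P₂ ⊕ Q₁))

/-- A subset `S` of `A_i` is bounded if it is contained in `[ω^α·(i−1)+1, x]`
for some `x < ω^α·i`. -/
def BoundedIn (α : Ordinal) (i : ℕ+) (S : Set (Xsp α)) : Prop :=
  ∃ x : Ordinal, x < omega0 ^ α * ((i : ℕ) : Ordinal) ∧
    ∀ y ∈ S, (y : Ordinal) ∈ Set.Icc (omega0 ^ α * (((i : ℕ) - 1 : ℕ) : Ordinal) + 1) x

lemma Ablock_isClopen (α : Ordinal) (i : ℕ+) : IsClopen (Ablock α i) := by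
  constructor
  · exact isClosed_Icc.preimage continuous_subtype_val
  · have : Ablock α i = (Subtype.val : Xsp α → Ordinal) ⁻¹'
        Set.Ioo (omega0 ^ α * (((i : ℕ) - 1 : ℕ) : Ordinal))
          (Order.succ (omega0 ^ α * ((i : ℕ) : Ordinal))) := by
      ext x
      simp only [Ablock, Set.mem_setOf_eq, Set.mem_Icc, Set.mem_preimage, Set.mem_Ioo,
        Order.lt_succ_iff, Order.add_one_le_iff]
    rw [this]
    exact isOpen_Ioo.preimage continuous_subtype_val

lemma split_homeo {X : Type*} [TopologicalSpace X] (S U : Set X) (hU : IsClopen U) :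
    Nonempty ((↥(S ∩ U) ⊕ ↥(S \ U)) ≃ₜ ↥S) := by
  let f : (↥(S ∩ U) ⊕ ↥(S \ U)) → ↥S :=
    Sum.elim (Set.inclusion Set.inter_subset_left) (Set.inclusion Set.diff_subset)
  have hb : Function.Bijective f := by
    constructor
    · rintro (⟨x, hx⟩ | ⟨x, hx⟩) (⟨y, hy⟩ | ⟨y, hy⟩) hxy <;>
        simp only [f, Sum.elim_inl, Sum.elim_inr, Set.inclusion_mk, Subtype.mk.injEq] at hxy <;>
        subst hxy
      · rfl
      · exact absurd hx.2 hy.2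
      · exact absurd hy.2 hx.2
      · rfl
    · rintro ⟨x, hx⟩
      by_cases hxU : x ∈ U
      · exact ⟨Sum.inl ⟨x, hx, hxU⟩, rfl⟩
      · exact ⟨Sum.inr ⟨x, hx, hxU⟩, rfl⟩
  have hc : Continuous f :=
    Continuous.sumElim (continuous_inclusion _) (continuous_inclusion _)
  have ho : IsOpenMap f := by
    apply IsOpenMap.sumElim
    · refine (Topology.IsEmbedding.inclusion _).isInducing.isOpenMap ?_
      rw [Set.range_inclusion]
      have : {x : ↥S | (x : X) ∈ S ∩ U} = Subtype.val ⁻¹' U := by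
        ext x; simp
      rw [this]
      exact hU.isOpen.preimage continuous_subtype_val
    · refine (Topology.IsEmbedding.inclusion _).isInducing.isOpenMap ?_
      rw [Set.range_inclusion]
      have : {x : ↥S | (x : X) ∈ S \ U} = Subtype.val ⁻¹' Uᶜ := by
        ext x; simp
      rw [this]
      exact hU.compl.isOpen.preimage continuous_subtype_val
  exact ⟨(Equiv.ofBijective f hb).toHomeomorphOfContinuousOpen hc ho⟩

lemma pairSim_general {X : Type*} [TopologicalSpace X] (h : X ≃ₜ X) (A B C : Set X)
    (hA : IsClopen A) (hB : B ⊆ A) (hC : C ⊆ A) (hm : ⇑h '' (A \ B) = A \ C) :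
    PairSim ↥(A \ ⇑h '' A) ↥(A \ ⇑h ⁻¹' A) ↥C ↥B := by
  have key : ∀ x ∈ A, x ∉ B → h x ∈ A ∧ h x ∉ C := fun x hx hxB => by
    have : h x ∈ A \ C := hm ▸ Set.mem_image_of_mem _ ⟨hx, hxB⟩
    exact this
  have key2 : ∀ y ∈ A, y ∉ C → ∃ x, (x ∈ A ∧ x ∉ B) ∧ h x = y := fun y hy hyC => by
    have : y ∈ h '' (A \ B) := hm ▸ ⟨hy, hyC⟩
    exact this
  have eQ : B \ ⇑h ⁻¹' A = A \ ⇑h ⁻¹' A := by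
    ext x
    constructor
    · exact fun hx => ⟨hB hx.1, hx.2⟩
    · exact fun hx => ⟨by_contra fun hn => hx.2 (key x hx.1 hn).1, hx.2⟩
  have eP : C \ ⇑h '' A = A \ ⇑h '' A := by
    ext y
    constructor
    · exact fun hy => ⟨hC hy.1, hy.2⟩
    · refine fun hy => ⟨by_contra fun hn => ?_, hy.2⟩
      obtain ⟨x, hx, rfl⟩ := key2 y hy.1 hn
      exact hy.2 ⟨x, hx.1, rfl⟩
  have eI : ⇑h '' (B ∩ ⇑h ⁻¹' A) = C ∩ ⇑h '' A := by
    ext y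
    constructor
    · rintro ⟨x, ⟨hxB, hxA⟩, rfl⟩
      refine ⟨by_contra fun hn => ?_, x, hB hxB, rfl⟩
      obtain ⟨z, hz, hzx⟩ := key2 _ hxA hn
      exact hz.2 (h.injective hzx ▸ hxB)
    · rintro ⟨hy, x, hx, rfl⟩
      exact ⟨x, ⟨by_contra fun hn => (key x hx hn).2 hy, hC hy⟩, rfl⟩
  obtain ⟨e1⟩ := split_homeo B (⇑h ⁻¹' A) (hA.preimage h.continuous)
  obtain ⟨e2⟩ := split_homeo C (⇑h '' A)
    ⟨h.isClosedMap _ hA.isClosed, h.isOpenMap _ hA.isOpen⟩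
  have e3 : ↥(B ∩ ⇑h ⁻¹' A) ≃ₜ ↥(C ∩ ⇑h '' A) := (h.image _).trans (Homeomorph.setCongr eI)
  rw [← eQ, ← eP]
  refine ⟨((Homeomorph.refl _).sumCongr e1.symm).trans ?_⟩
  refine (Homeomorph.sumAssoc _ _ _).symm.trans ?_
  refine Homeomorph.sumCongr ?_ (Homeomorph.refl _)
  exact (Homeomorph.sumComm _ _).trans ((e3.sumCongr (Homeomorph.refl _)).trans e2)

/-- Suppose `h` lies in the kernel `K*` of `π`, and `B`, `C` are bounded
clopen subsets of `A_i` such that `h` maps `A_i \ B` onto `A_i \ C`. Then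
`(P_i(h), Q_i(h)) ∼ (C, B)`, where `P_i(h) = A_i \ h(A_i)` and `Q_i(h) = A_i \ h⁻¹(A_i)`. -/
theorem pair_sim_of_kernel_member (α : Ordinal) (hα : α.card ≤ Cardinal.aleph0)
    (π : (Xsp α ≃ₜ Xsp α) → Equiv.Perm ℕ+) (hπ : IsBlockPerm α π)
    (h : Xsp α ≃ₜ Xsp α) (hker : π h = 1) (i : ℕ+)
    (B C : Set (Xsp α)) (hBsub : B ⊆ Ablock α i) (hCsub : C ⊆ Ablock α i)
    (hBclopen : IsClopen B) (hCclopen : IsClopen C)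
    (hBbdd : BoundedIn α i B) (hCbdd : BoundedIn α i C)
    (hmaps : ⇑h '' (Ablock α i \ B) = Ablock α i \ C) :
    PairSim ↥(Ablock α i \ ⇑h '' Ablock α i) ↥(Ablock α i \ ⇑h ⁻¹' Ablock α i)
      ↥C ↥B := by
  exact pairSim_general h _ B C (Ablock_isClopen α i) hBsub hCsub hmaps
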